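/- arXiv:2205.14855 — 2 statements merged into one kernel-verified Lean document; each statement's English description precedes it below -/
import Mathlib

section
/- Suppose σ_r − σ_{r+1} > 2‖(I − U_r U_rᵀ) y_n‖ (in particular (I − U_r U_rᵀ)y_n may be arbitrary; equivalently ρ := (σ_r − σ_{r+1})/‖(I − U_r U_rᵀ)y_n‖ > 2 when the denominator is nonzero). Then for any choice of leading-r orthonormal left singular vectors Û_r of Ŷ, ‖Û_r Û_rᵀ − U_r U_rᵀ‖_F ≤ 4√2 · (‖(I − U_r U_rᵀ) y_n‖/(σ_r − σ_{r+1})) · √( Σ_{i=1}^{r} (u_iᵀ y_n / σ_i)² ). -/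
open Matrix MeasureTheory ProbabilityTheory
open scoped BigOperators ENNReal NNReal

noncomputable section

/-- Euclidean norm of a vector in `Fin p → ℝ`. -/
def vnorm {p : ℕ} (x : Fin p → ℝ) : ℝ := Real.sqrt (∑ i, (x i) ^ 2)

/-- Frobenius norm of a real matrix. -/
def fnorm {m n : ℕ} (A : Matrix (Fin m) (Fin n) ℝ) : ℝ :=
  Real.sqrt (∑ i, ∑ j, (A i j) ^ 2)

/-- Operator (spectral) norm of a real matrix. -/
def opnorm {m n : ℕ} (A : Matrix (Fin m) (Fin n) ℝ) : ℝ :=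
  ‖LinearMap.toContinuousLinearMap (Matrix.toEuclideanLin A)‖

/-- A (full) singular value decomposition of a real `p × n` matrix `A`:
`A = U D Vᵀ` with `U, V` orthogonal and `D` the rectangular diagonal matrix with the
nonincreasing nonnegative singular values `sv 0 ≥ sv 1 ≥ ⋯` on the diagonal
(0-indexed, so the math `σ_i` is `sv (i-1)`), extended by zero beyond `min p n`. -/
structure SVDData (p n : ℕ) (A : Matrix (Fin p) (Fin n) ℝ) where
  U : Matrix (Fin p) (Fin p) ℝ
  V : Matrix (Fin n) (Fin n) ℝ
  sv : ℕ → ℝ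
  hU : Uᵀ * U = 1
  hV : Vᵀ * V = 1
  sv_anti : ∀ i j : ℕ, i ≤ j → sv j ≤ sv i
  sv_nonneg : ∀ i, 0 ≤ sv i
  sv_zero : ∀ j, min p n ≤ j → sv j = 0
  decomp : A = U * (Matrix.of fun (i : Fin p) (j : Fin n) => if (i : ℕ) = (j : ℕ) then sv (i : ℕ) else 0) * Vᵀ

/-- Projection matrix `U_{1:r} U_{1:r}ᵀ` onto the span of the first `r` columns of `U`. -/
def projr {p : ℕ} (U : Matrix (Fin p) (Fin p) ℝ) (r : ℕ) : Matrix (Fin p) (Fin p) ℝ :=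
  Matrix.of fun i j => ∑ l : Fin p, if (l : ℕ) < r then U i l * U j l else 0

/-- The `l`-th (0-indexed) column of a matrix, as a vector. -/
def matCol {p q : ℕ} (U : Matrix (Fin p) (Fin q) ℝ) (l : ℕ) : Fin p → ℝ :=
  fun i => if h : l < q then U i ⟨l, h⟩ else 0

/-- `β` for a cluster assignment: `(k/n) ·` (size of the smallest cluster),
so that `β·n/k` is the size of the smallest cluster. -/
def betaMin (n k : ℕ) (z : Fin n → Fin k) : ℝ :=
  ((k : ℝ) / n) * ⨅ a : Fin k, ((Finset.univ.filter fun i => z i = a).card : ℝ)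

/-- Minimum pairwise distance between the centers. -/
def Delta {p k : ℕ} (θ : Fin k → Fin p → ℝ) : ℝ :=
  ⨅ q : {q : Fin k × Fin k // q.1 ≠ q.2}, vnorm (fun i => θ q.1.1 i - θ q.1.2 i)

/-- Misclustering error `ℓ(z, z*)`. -/
def miscl {n k : ℕ} (z zs : Fin n → Fin k) : ℝ :=
  (⨅ φ : Equiv.Perm (Fin k), ((Finset.univ.filter fun i => z i ≠ φ (zs i)).card : ℝ)) / n

/-- `(z, c)` is a global minimizer of the k-means objective for the columns of `W * X`. -/
def IsKMeans {p n k : ℕ} (W : Matrix (Fin p) (Fin p) ℝ) (X : Matrix (Fin p) (Fin n) ℝ)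
    (z : Fin n → Fin k) (c : Fin k → Fin p → ℝ) : Prop :=
  ∀ (z' : Fin n → Fin k) (c' : Fin k → Fin p → ℝ),
    ∑ i, ∑ a, (W.mulVec (fun b => X b i) a - c (z i) a) ^ 2 ≤
      ∑ i, ∑ a, (W.mulVec (fun b => X b i) a - c' (z' i) a) ^ 2

/-!
In singular-vector coordinates, `W = Ûᵀ U` is an orthogonal matrix which diagonalizes the rank-one
update `diag σ² + a aᵀ` of a diagonal matrix, where `a = Uᵀ y`.  Reading this off entrywise, with
`b = W a = Ûᵀ y`, gives `(σ̂_j² - σ_l²) W_jl = b_j a_l`.  By a Weyl-type inequality, `σ̂_j²`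
exceeds `σ_{r+1}²` by at most `w² = ‖(I - U_r U_rᵀ) y‖²` for every trailing index `j`.  The gap thus
survives the perturbation, and it bounds the entries of the block of `W` with trailing rows and
leading columns.  The saving factor `w` appears because the `b_j` in that block are dominated by the
coordinates of the perturbation projected onto the trailing singular vectors.  Finally
`‖Û_r Û_rᵀ - U_r U_rᵀ‖_F²` is exactly twice the squared Frobenius norm of the block.
-/

section Orthogonal

variable {l m n R : Type*} [Fintype n] [CommRing R]

lemma mulVec_dotProduct_mulVec_of_transpose_mul_self [Fintype m] [DecidableEq n]
    {Q : Matrix m n R} (hQ : Qᵀ * Q = 1) (x z : n → R) : (Q *ᵥ x) ⬝ᵥ (Q *ᵥ z) = x ⬝ᵥ z := by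
  rw [dotProduct_mulVec, ← mulVec_transpose, mulVec_mulVec, hQ, one_mulVec]

lemma sum_sum_sq_eq_trace_mul_transpose [Fintype m] (A : Matrix m n R) :
    ∑ i, ∑ j, A i j ^ 2 = trace (A * Aᵀ) := by
  simp [trace, mul_apply, sq]

lemma sum_sum_sq_transpose_mul_mul [Fintype l] [Fintype m] [DecidableEq m] [DecidableEq n]
    {Q : Matrix m m R} {P : Matrix n l R} (hQ : Q * Qᵀ = 1) (hP : P * Pᵀ = 1) (A : Matrix m n R) :
    ∑ i, ∑ j, (Qᵀ * A * P) i j ^ 2 = ∑ i, ∑ j, A i j ^ 2 := by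
  have hmul : Qᵀ * A * P * (Qᵀ * A * P)ᵀ = Qᵀ * (A * ((P * Pᵀ) * Aᵀ)) * Q := by
    simp only [transpose_mul, transpose_transpose, Matrix.mul_assoc]
  rw [sum_sum_sq_eq_trace_mul_transpose, sum_sum_sq_eq_trace_mul_transpose, hmul, hP,
    Matrix.one_mul, trace_mul_cycle, hQ, Matrix.one_mul]

lemma sum_sq_row_eq_one [DecidableEq m] {Q : Matrix m n R} (hQ : Q * Qᵀ = 1) (i : m) :
    ∑ j, Q i j ^ 2 = 1 := by
  simpa [mul_apply, sq] using congrFun₂ hQ i i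

lemma transpose_mul_mem_orthogonalGroup [DecidableEq n] {U V : Matrix n n R}
    (hU : U ∈ orthogonalGroup n R) (hV : V ∈ orthogonalGroup n R) :
    Vᵀ * U ∈ orthogonalGroup n R := by
  rw [mem_orthogonalGroup_iff', transpose_mul, transpose_transpose, Matrix.mul_assoc,
    ← Matrix.mul_assoc V, (mem_orthogonalGroup_iff _ _).1 hV, Matrix.one_mul,
    (mem_orthogonalGroup_iff' _ _).1 hU]

end Orthogonal

section CoordProj

/-- The matrix of the orthogonal projection onto the coordinates in `S`. -/
def coordProj {ι : Type*} [DecidableEq ι] (R : Type*) [Zero R] [One R] (S : Finset ι) :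
    Matrix ι ι R :=
  diagonal fun l => if l ∈ S then 1 else 0

variable {ι R : Type*} [Fintype ι] [DecidableEq ι] [CommRing R]

lemma coordProj_mulVec_apply (S : Finset ι) (x : ι → R) (l : ι) :
    (coordProj R S *ᵥ x) l = if l ∈ S then x l else 0 := by
  simp [coordProj, mulVec_diagonal]

lemma sub_coordProj_mulVec (S : Finset ι) (x : ι → R) :
    x - coordProj R S *ᵥ x = coordProj R Sᶜ *ᵥ x := by
  ext l
  by_cases hl : l ∈ S <;> simp [coordProj_mulVec_apply, hl]

lemma coordProj_mulVec_dotProduct_self (S : Finset ι) (x : ι → R) :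
    (coordProj R S *ᵥ x) ⬝ᵥ (coordProj R S *ᵥ x) = ∑ l ∈ S, x l ^ 2 := by
  simp [dotProduct, coordProj_mulVec_apply, sq]

lemma sum_sum_sq_coordProj_commutator {W : Matrix ι ι R} (hW : W ∈ orthogonalGroup ι R)
    (S : Finset ι) :
    ∑ j, ∑ l, (coordProj R S * W - W * coordProj R S) j l ^ 2 =
      2 * ∑ j ∈ Sᶜ, ∑ l ∈ S, W j l ^ 2 := by
  have hrow : ∑ j ∈ S, ∑ l, W j l ^ 2 = S.card := by
    simp [sum_sq_row_eq_one ((mem_orthogonalGroup_iff _ _).1 hW)]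
  have hcol : ∑ l ∈ S, ∑ j, W j l ^ 2 = S.card := by
    have hWt : Wᵀ * Wᵀᵀ = 1 := (mem_orthogonalGroup_iff' _ _).1 hW
    simpa using Finset.sum_congr rfl fun l (_ : l ∈ S) => sum_sq_row_eq_one hWt l
  have hentry (j l : ι) : (coordProj R S * W - W * coordProj R S) j l ^ 2 =
      (if j ∈ S then W j l ^ 2 else 0) - (if l ∈ S then W j l ^ 2 else 0) +
        2 * (if j ∈ Sᶜ then (if l ∈ S then W j l ^ 2 else 0) else 0) := by
    simp only [coordProj, Matrix.sub_apply, diagonal_mul, mul_diagonal, Finset.mem_compl, ite_not]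
    split_ifs <;> ring
  calc ∑ j, ∑ l, (coordProj R S * W - W * coordProj R S) j l ^ 2
      = ∑ j ∈ S, ∑ l, W j l ^ 2 - ∑ l ∈ S, ∑ j, W j l ^ 2 +
          2 * ∑ j ∈ Sᶜ, ∑ l ∈ S, W j l ^ 2 := by
        rw [Finset.sum_comm (s := S) (t := Finset.univ) (f := fun l j => W j l ^ 2)]
        simp only [hentry, Finset.sum_add_distrib, Finset.sum_sub_distrib, ← Finset.mul_sum,
          Finset.sum_ite_irrel, Finset.sum_const_zero, Finset.sum_ite_mem, Finset.univ_inter]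
    _ = 2 * ∑ j ∈ Sᶜ, ∑ l ∈ S, W j l ^ 2 := by rw [hrow, hcol, sub_self, zero_add]

end CoordProj

section RankOneUpdate

variable {ι R 𝕜 : Type*} [Fintype ι] [DecidableEq ι] [CommRing R]
  [Field 𝕜] [LinearOrder 𝕜] [IsStrictOrderedRing 𝕜] {S : Finset ι} {j : ι}

lemma sub_mul_apply_of_diagonal_mul_eq {W : Matrix ι ι R} {a lam mu : ι → R}
    (h : diagonal mu * W = W * (diagonal lam + vecMulVec a a)) (j l : ι) :
    (mu j - lam l) * W j l = (W *ᵥ a) j * a l := by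
  have hjl := congrFun₂ h j l
  rw [Matrix.mul_add, mul_vecMulVec, Matrix.add_apply, diagonal_mul, mul_diagonal,
    vecMulVec_apply] at hjl
  linear_combination hjl

lemma sum_mul_sq_eq_of_diagonal_mul_eq {W : Matrix ι ι R} {a lam mu : ι → R}
    (hW : W * Wᵀ = 1) (h : diagonal mu * W = W * (diagonal lam + vecMulVec a a))
    (c : ι → R) :
    ∑ i, mu i * c i ^ 2 = ∑ l, lam l * (Wᵀ *ᵥ c) l ^ 2 + ((Wᵀ *ᵥ c) ⬝ᵥ a) ^ 2 := by
  have hmu : diagonal mu = W * (diagonal lam + vecMulVec a a) * Wᵀ := by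
    rw [← h, Matrix.mul_assoc, hW, Matrix.mul_one]
  calc ∑ i, mu i * c i ^ 2 = c ⬝ᵥ diagonal mu *ᵥ c := by
        simp only [dotProduct, mulVec_diagonal]
        exact Finset.sum_congr rfl fun i _ => by ring
    _ = (Wᵀ *ᵥ c) ⬝ᵥ (diagonal lam + vecMulVec a a) *ᵥ (Wᵀ *ᵥ c) := by
        rw [hmu, ← mulVec_mulVec, ← mulVec_mulVec, dotProduct_mulVec, ← mulVec_transpose]
    _ = ∑ l, lam l * (Wᵀ *ᵥ c) l ^ 2 + ((Wᵀ *ᵥ c) ⬝ᵥ a) ^ 2 := by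
        rw [add_mulVec, dotProduct_add, vecMulVec_mulVec, dotProduct_smul, dotProduct_comm a]
        simp only [dotProduct, mulVec_diagonal, MulOpposite.smul_eq_mul_unop,
          MulOpposite.unop_op]
        congr 1
        · exact Finset.sum_congr rfl fun l _ => by ring
        · ring

lemma exists_ne_zero_supported_insert_transpose_mulVec_eq_zero [IsDomain R]
    (W : Matrix ι ι R) (hj : j ∉ S) :
    ∃ c : ι → R, c ≠ 0 ∧ (∀ i ∉ insert j S, c i = 0) ∧ ∀ l ∈ S, (Wᵀ *ᵥ c) l = 0 := by
  -- The constraints are the rows of a square matrix `N` whose row `j` is left free.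
  let N : Matrix ι ι R := of fun k => if k ∈ S then Wᵀ k else if k = j then 0 else Pi.single k 1
  have hdet : N.det = 0 := det_eq_zero_of_row_eq_zero j fun i => by simp [N, hj]
  obtain ⟨c, hc, hNc⟩ := exists_mulVec_eq_zero_iff.2 hdet
  refine ⟨c, hc, fun i hi => ?_, fun l hl => ?_⟩
  · rw [Finset.mem_insert, not_or] at hi
    simpa [N, mulVec, hi.1, hi.2] using congrFun hNc i
  · simpa [N, mulVec, hl] using congrFun hNc l

lemma sq_dotProduct_le_of_eq_zero {x : ι → 𝕜} (hx : ∀ l ∈ S, x l = 0) (a : ι → 𝕜) :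
    (x ⬝ᵥ a) ^ 2 ≤ (x ⬝ᵥ x) * ∑ l ∈ Sᶜ, a l ^ 2 := by
  have hsum (z : ι → 𝕜) : x ⬝ᵥ z = ∑ l ∈ Sᶜ, x l * z l :=
    (Finset.sum_subset (Finset.subset_univ _) fun l _ hl => by simp [hx l (by simpa using hl)]).symm
  rw [hsum, hsum]
  simpa only [sq (x _)] using Finset.sum_mul_sq_le_sq_mul_sq Sᶜ x a

variable {W : Matrix ι ι 𝕜} {a lam mu : ι → 𝕜} {M : 𝕜}

-- Courant–Fischer: test both quadratic forms on a vector spanned by the eigenvectors in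
-- `insert j S` of the updated matrix and orthogonal to the eigenvectors in `S` of the old one.
lemma le_add_sum_compl_sq_of_diagonal_mul_eq (hW : W * Wᵀ = 1)
    (h : diagonal mu * W = W * (diagonal lam + vecMulVec a a)) (hj : j ∉ S)
    (hmu : ∀ i ∈ S, mu j ≤ mu i) (hlam : ∀ l ∉ S, lam l ≤ M) :
    mu j ≤ M + ∑ l ∈ Sᶜ, a l ^ 2 := by
  obtain ⟨c, hc, hcsupp, hcS⟩ := exists_ne_zero_supported_insert_transpose_mulVec_eq_zero W hj
  set x := Wᵀ *ᵥ c with hx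
  have hxx : x ⬝ᵥ x = c ⬝ᵥ c :=
    mulVec_dotProduct_mulVec_of_transpose_mul_self (by rwa [transpose_transpose]) c c
  have hlower : mu j * (c ⬝ᵥ c) ≤ ∑ i, mu i * c i ^ 2 := by
    rw [dotProduct, Finset.mul_sum]
    refine Finset.sum_le_sum fun i _ => ?_
    by_cases hi : i ∈ insert j S
    · have hji : mu j ≤ mu i := by
        rcases Finset.mem_insert.1 hi with rfl | hi
        exacts [le_rfl, hmu i hi]
      rw [← sq]
      gcongr
    · simp [hcsupp i hi]
  have hupper : ∑ l, lam l * x l ^ 2 ≤ M * (x ⬝ᵥ x) := by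
    rw [dotProduct, Finset.mul_sum]
    refine Finset.sum_le_sum fun l _ => ?_
    by_cases hl : l ∈ S
    · simp [hcS l hl]
    · rw [← sq]
      gcongr
      exact hlam l hl
  have hcross : (x ⬝ᵥ a) ^ 2 ≤ (x ⬝ᵥ x) * ∑ l ∈ Sᶜ, a l ^ 2 := sq_dotProduct_le_of_eq_zero hcS a
  have hpos : 0 < c ⬝ᵥ c :=
    (Finset.sum_nonneg fun i _ => mul_self_nonneg (c i)).lt_of_ne'
      (dotProduct_self_eq_zero.not.2 hc)
  refine le_of_mul_le_mul_right ?_ hpos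
  rw [sum_mul_sq_eq_of_diagonal_mul_eq hW h c, ← hx] at hlower
  rw [hxx] at hupper hcross
  linarith

-- The leading columns contribute `-b_j² a_l² / (lam l - mu j) ≤ 0` to `b_j (b_j - e_j)`, where
-- `b = W a` and `e = W (coordProj Sᶜ a)`.
lemma sq_mulVec_le_sq_mulVec_coordProj_compl
    (h : diagonal mu * W = W * (diagonal lam + vecMulVec a a)) (hgap : ∀ l ∈ S, mu j < lam l) :
    (W *ᵥ a) j ^ 2 ≤ (W *ᵥ (coordProj 𝕜 Sᶜ *ᵥ a)) j ^ 2 := by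
  set b := (W *ᵥ a) j with hb
  set e := (W *ᵥ (coordProj 𝕜 Sᶜ *ᵥ a)) j with he
  have hsub : b - e = ∑ l ∈ S, W j l * a l := by
    rw [hb, he, ← sub_coordProj_mulVec, mulVec_sub, Pi.sub_apply, sub_sub_cancel,
      mulVec, dotProduct]
    simp [coordProj_mulVec_apply]
  have hnonpos : b * (b - e) ≤ 0 := by
    rw [hsub, Finset.mul_sum]
    refine Finset.sum_nonpos fun l hl => ?_
    have hpos : 0 < lam l - mu j := sub_pos.2 (hgap l hl)
    have hterm : b * (W j l * a l) * (lam l - mu j) = -(b * a l) ^ 2 := by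
      linear_combination -(b * a l) * sub_mul_apply_of_diagonal_mul_eq h j l
    exact nonpos_of_mul_nonpos_left (hterm ▸ neg_nonpos.2 (sq_nonneg _)) hpos
  nlinarith [sq_nonneg (b - e)]

lemma sum_compl_sum_sq_le_of_diagonal_mul_eq (hW : W ∈ orthogonalGroup ι 𝕜)
    (h : diagonal mu * W = W * (diagonal lam + vecMulVec a a))
    (hmu : ∀ j ∉ S, ∀ i ∈ S, mu j ≤ mu i) (hlam : ∀ l ∉ S, lam l ≤ M)
    (hgap : ∀ l ∈ S, M + ∑ k ∈ Sᶜ, a k ^ 2 < lam l) :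
    ∑ j ∈ Sᶜ, ∑ l ∈ S, W j l ^ 2 ≤
      (∑ k ∈ Sᶜ, a k ^ 2) * ∑ l ∈ S, (a l / (lam l - M - ∑ k ∈ Sᶜ, a k ^ 2)) ^ 2 := by
  set w2 := ∑ k ∈ Sᶜ, a k ^ 2
  set e := W *ᵥ (coordProj 𝕜 Sᶜ *ᵥ a) with he
  have hnorm : ∑ j, e j ^ 2 = w2 := by
    calc ∑ j, e j ^ 2 = e ⬝ᵥ e := by simp only [dotProduct, sq]
      _ = w2 := by
        rw [he, mulVec_dotProduct_mulVec_of_transpose_mul_self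
          ((mem_orthogonalGroup_iff' _ _).1 hW), coordProj_mulVec_dotProduct_self]
  have hentry : ∀ j ∈ Sᶜ, ∀ l ∈ S, W j l ^ 2 ≤ e j ^ 2 * (a l / (lam l - M - w2)) ^ 2 := by
    intro j hj l hl
    rw [Finset.mem_compl] at hj
    have hmuj : mu j ≤ M + w2 :=
      le_add_sum_compl_sq_of_diagonal_mul_eq ((mem_orthogonalGroup_iff _ _).1 hW) h hj
        (hmu j hj) hlam
    have hpos : 0 < lam l - M - w2 := by linarith [hgap l hl]
    have hb : (W *ᵥ a) j ^ 2 ≤ e j ^ 2 :=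
      sq_mulVec_le_sq_mulVec_coordProj_compl h fun k hk => hmuj.trans_lt (hgap k hk)
    rw [div_pow, ← mul_div_assoc, le_div_iff₀ (by positivity)]
    calc W j l ^ 2 * (lam l - M - w2) ^ 2 ≤ W j l ^ 2 * (lam l - mu j) ^ 2 := by
          gcongr ?_ * ?_ ^ 2
          linarith
      _ = (W *ᵥ a) j ^ 2 * a l ^ 2 := by
          rw [← mul_pow, ← mul_pow, ← sub_mul_apply_of_diagonal_mul_eq h]
          ring
      _ ≤ e j ^ 2 * a l ^ 2 := by gcongr
  calc ∑ j ∈ Sᶜ, ∑ l ∈ S, W j l ^ 2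
      ≤ ∑ j ∈ Sᶜ, ∑ l ∈ S, e j ^ 2 * (a l / (lam l - M - w2)) ^ 2 :=
        Finset.sum_le_sum fun j hj => Finset.sum_le_sum (hentry j hj)
    _ = (∑ j ∈ Sᶜ, e j ^ 2) * ∑ l ∈ S, (a l / (lam l - M - w2)) ^ 2 := by
        rw [Finset.sum_mul_sum]
    _ ≤ w2 * ∑ l ∈ S, (a l / (lam l - M - w2)) ^ 2 := by
        rw [← hnorm]
        gcongr
        exact Finset.subset_univ _

end RankOneUpdate

section SpectralProjection

variable {ι R : Type*} [Fintype ι] [DecidableEq ι] [CommRing R]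

lemma sum_sum_sq_sub_conj_coordProj {U V : Matrix ι ι R} (hU : U ∈ orthogonalGroup ι R)
    (hV : V ∈ orthogonalGroup ι R) (S : Finset ι) :
    ∑ i, ∑ j, (V * coordProj R S * Vᵀ - U * coordProj R S * Uᵀ) i j ^ 2 =
      2 * ∑ j ∈ Sᶜ, ∑ l ∈ S, (Vᵀ * U) j l ^ 2 := by
  have hcomm : Vᵀ * (V * coordProj R S * Vᵀ - U * coordProj R S * Uᵀ) * U =
      coordProj R S * (Vᵀ * U) - (Vᵀ * U) * coordProj R S := by
    calc _ = (Vᵀ * V) * coordProj R S * (Vᵀ * U) - (Vᵀ * U) * coordProj R S * (Uᵀ * U) := by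
          noncomm_ring
      _ = _ := by
          rw [(mem_orthogonalGroup_iff' _ _).1 hU, (mem_orthogonalGroup_iff' _ _).1 hV,
            Matrix.one_mul, Matrix.mul_one]
  rw [← sum_sum_sq_transpose_mul_mul ((mem_orthogonalGroup_iff _ _).1 hV)
    ((mem_orthogonalGroup_iff _ _).1 hU), hcomm,
    sum_sum_sq_coordProj_commutator (transpose_mul_mem_orthogonalGroup hU hV)]

lemma diagonal_mul_transpose_mul_eq_of_eq_add_vecMulVec {U V : Matrix ι ι R} {lam mu y : ι → R}
    (hU : U ∈ orthogonalGroup ι R) (hV : V ∈ orthogonalGroup ι R)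
    (h : V * diagonal mu * Vᵀ = U * diagonal lam * Uᵀ + vecMulVec y y) :
    diagonal mu * (Vᵀ * U) =
      (Vᵀ * U) * (diagonal lam + vecMulVec (Uᵀ *ᵥ y) (Uᵀ *ᵥ y)) := by
  have hconj : Uᵀ * vecMulVec y y * U = vecMulVec (Uᵀ *ᵥ y) (Uᵀ *ᵥ y) := by
    rw [mul_vecMulVec, vecMulVec_mul, ← mulVec_transpose]
  calc diagonal mu * (Vᵀ * U) = (Vᵀ * V) * diagonal mu * (Vᵀ * U) := by
        rw [(mem_orthogonalGroup_iff' _ _).1 hV, Matrix.one_mul]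
    _ = Vᵀ * (V * diagonal mu * Vᵀ) * U := by simp only [Matrix.mul_assoc]
    _ = Vᵀ * U * (diagonal lam * (Uᵀ * U)) + Vᵀ * ((U * Uᵀ) * vecMulVec y y) * U := by
        rw [h, (mem_orthogonalGroup_iff _ _).1 hU, Matrix.one_mul, Matrix.mul_add, Matrix.add_mul]
        simp only [Matrix.mul_assoc]
    _ = Vᵀ * U * (diagonal lam + vecMulVec (Uᵀ *ᵥ y) (Uᵀ *ᵥ y)) := by
        rw [(mem_orthogonalGroup_iff' _ _).1 hU, Matrix.mul_one, ← hconj, Matrix.mul_add]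
        simp only [Matrix.mul_assoc]

lemma sum_sum_sq_sub_conj_coordProj_le {𝕜 : Type*} [Field 𝕜] [LinearOrder 𝕜]
    [IsStrictOrderedRing 𝕜] {U V : Matrix ι ι 𝕜} {lam mu y : ι → 𝕜} {S : Finset ι} {M : 𝕜}
    (hU : U ∈ orthogonalGroup ι 𝕜) (hV : V ∈ orthogonalGroup ι 𝕜)
    (h : V * diagonal mu * Vᵀ = U * diagonal lam * Uᵀ + vecMulVec y y)
    (hmu : ∀ j ∉ S, ∀ i ∈ S, mu j ≤ mu i) (hlam : ∀ l ∉ S, lam l ≤ M)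
    (hgap : ∀ l ∈ S, M + ∑ k ∈ Sᶜ, (Uᵀ *ᵥ y) k ^ 2 < lam l) :
    ∑ i, ∑ j, (V * coordProj 𝕜 S * Vᵀ - U * coordProj 𝕜 S * Uᵀ) i j ^ 2 ≤
      2 * ((∑ k ∈ Sᶜ, (Uᵀ *ᵥ y) k ^ 2) *
        ∑ l ∈ S, ((Uᵀ *ᵥ y) l / (lam l - M - ∑ k ∈ Sᶜ, (Uᵀ *ᵥ y) k ^ 2)) ^ 2) := by
  rw [sum_sum_sq_sub_conj_coordProj hU hV]
  gcongr
  exact sum_compl_sum_sq_le_of_diagonal_mul_eq (transpose_mul_mem_orthogonalGroup hU hV)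
    (diagonal_mul_transpose_mul_eq_of_eq_add_vecMulVec hU hV h) hmu hlam hgap

end SpectralProjection

section LeadingIndices

variable {p : ℕ}

/-- The indices of the `r` leading singular vectors, counted from `0`; this is all of `Fin p` when
`p ≤ r`. -/
def leadingIndices (p r : ℕ) : Finset (Fin p) := {l | (l : ℕ) < r}

@[simp]
lemma mem_leadingIndices {r : ℕ} {l : Fin p} : l ∈ leadingIndices p r ↔ (l : ℕ) < r := by
  simp [leadingIndices]

lemma sum_leadingIndices {E : Type*} [AddCommMonoid E] {r : ℕ} (hr : r ≤ p) (f : ℕ → E) :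
    ∑ l ∈ leadingIndices p r, f l = ∑ l ∈ Finset.range r, f l := by
  refine Finset.sum_nbij (fun l : Fin p => (l : ℕ)) (by simp) (fun _ _ _ _ => Fin.ext)
    (fun l hl => ?_) fun _ _ => rfl
  have hlr : l < r := by simpa using hl
  exact ⟨⟨l, hlr.trans_le hr⟩, by simpa using hlr, rfl⟩

lemma projr_eq_mul_coordProj_mul_transpose (U : Matrix (Fin p) (Fin p) ℝ) (r : ℕ) :
    projr U r = U * coordProj ℝ (leadingIndices p r) * Uᵀ := by
  ext i j
  rw [mul_apply]
  simp [projr, coordProj, mul_diagonal]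

lemma sum_matCol_mul (U : Matrix (Fin p) (Fin p) ℝ) (y : Fin p → ℝ) (l : Fin p) :
    ∑ j, matCol U l j * y j = (Uᵀ *ᵥ y) l := by
  simp [matCol, mulVec, dotProduct]

lemma sq_vnorm_sub_projr_mulVec {U : Matrix (Fin p) (Fin p) ℝ}
    (hU : U ∈ orthogonalGroup (Fin p) ℝ) (r : ℕ) (y : Fin p → ℝ) :
    vnorm (y - projr U r *ᵥ y) ^ 2 = ∑ k ∈ (leadingIndices p r)ᶜ, (Uᵀ *ᵥ y) k ^ 2 := by
  have hres : y - projr U r *ᵥ y = U *ᵥ (coordProj ℝ (leadingIndices p r)ᶜ *ᵥ (Uᵀ *ᵥ y)) := by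
    rw [← sub_coordProj_mulVec, mulVec_sub, mulVec_mulVec, (mem_orthogonalGroup_iff _ _).1 hU,
      one_mulVec, projr_eq_mul_coordProj_mul_transpose, mulVec_mulVec, mulVec_mulVec,
      Matrix.mul_assoc]
  rw [← coordProj_mulVec_dotProduct_self,
    ← mulVec_dotProduct_mulVec_of_transpose_mul_self ((mem_orthogonalGroup_iff' _ _).1 hU), ← hres,
    vnorm, Real.sq_sqrt (Finset.sum_nonneg fun _ _ => sq_nonneg _)]
  simp only [dotProduct, sq]

end LeadingIndices

namespace SVDData

variable {p n : ℕ} {A : Matrix (Fin p) (Fin n) ℝ}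

lemma U_mem_orthogonalGroup (D : SVDData p n A) : D.U ∈ orthogonalGroup (Fin p) ℝ :=
  (mem_orthogonalGroup_iff' _ _).2 D.hU

lemma sq_sv_anti (D : SVDData p n A) {i j : ℕ} (hij : i ≤ j) : D.sv j ^ 2 ≤ D.sv i ^ 2 :=
  pow_le_pow_left₀ (D.sv_nonneg j) (D.sv_anti i j hij) 2

lemma mul_transpose_eq (D : SVDData p n A) :
    A * Aᵀ = D.U * diagonal (fun l : Fin p => D.sv l ^ 2) * D.Uᵀ := by
  let T : Matrix (Fin p) (Fin n) ℝ := of fun i j => if (i : ℕ) = (j : ℕ) then D.sv (i : ℕ) else 0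
  have hdecomp : A = D.U * T * D.Vᵀ := D.decomp
  have hTT : T * Tᵀ = diagonal fun l : Fin p => D.sv l ^ 2 := by
    ext i k
    by_cases hi : (i : ℕ) < n
    · rw [mul_apply, Finset.sum_eq_single ⟨i, hi⟩ (fun j _ hj => ?_) (by simp)]
      · by_cases hik : i = k
        · simp [T, hik, sq]
        · simp [T, hik, Fin.val_inj, Ne.symm hik]
      · have hij : (i : ℕ) ≠ j := fun h => hj (Fin.ext h.symm)
        simp [T, hij]
    · have hT (j : Fin n) : T i j = 0 := by simp [T, (j.2.trans_le (not_lt.1 hi)).ne']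
      simp [mul_apply, hT, diagonal_apply, D.sv_zero i ((min_le_right _ _).trans (not_lt.1 hi))]
  calc A * Aᵀ = D.U * (T * (D.Vᵀ * D.V) * Tᵀ) * D.Uᵀ := by
        simp only [hdecomp, transpose_mul, transpose_transpose, Matrix.mul_assoc]
    _ = D.U * diagonal (fun l : Fin p => D.sv l ^ 2) * D.Uᵀ := by rw [D.hV, Matrix.mul_one, hTT]

end SVDData

lemma mul_transpose_self_eq_add_vecMulVec_last {m R : Type*} [CommSemiring R] {n : ℕ}
    {Yhat : Matrix m (Fin (n + 1)) R} {Y : Matrix m (Fin n) R} {y : m → R}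
    (hY : ∀ i j, Y i j = Yhat i (Fin.castSucc j)) (hy : ∀ i, y i = Yhat i (Fin.last n)) :
    Yhat * Yhatᵀ = Y * Yᵀ + vecMulVec y y := by
  ext i k
  simp [mul_apply, vecMulVec_apply, Fin.sum_univ_castSucc, hY, hy]

lemma sq_add_sq_lt_sq_of_gap {s t w x : ℝ} (ht : 0 ≤ t) (hw : 0 ≤ w) (hgap : 2 * w < s - t)
    (hx : s ≤ x) : t ^ 2 + w ^ 2 < x ^ 2 := by
  nlinarith

lemma div_sq_sub_le_of_gap {s t w x : ℝ} (ht : 0 ≤ t) (hw : 0 ≤ w) (hgap : 2 * w < s - t)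
    (hx : s ≤ x) (a : ℝ) : (a / (x ^ 2 - t ^ 2 - w ^ 2)) ^ 2 ≤ (4 / (s - t)) ^ 2 * (a / x) ^ 2 := by
  have hg : 0 < s - t := by linarith
  have hx0 : 0 < x := by linarith
  have hden : (s - t) / 4 * x ≤ x ^ 2 - t ^ 2 - w ^ 2 := by nlinarith
  calc (a / (x ^ 2 - t ^ 2 - w ^ 2)) ^ 2 = a ^ 2 / (x ^ 2 - t ^ 2 - w ^ 2) ^ 2 := div_pow ..
    _ ≤ a ^ 2 / ((s - t) / 4 * x) ^ 2 := by gcongr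
    _ = (4 / (s - t)) ^ 2 * (a / x) ^ 2 := by field_simp

lemma sqrt_two_mul_sqrt_sum_le_of_gap {ι : Type*} {I : Finset ι} {s t w : ℝ} {σ : ι → ℝ}
    (ht : 0 ≤ t) (hw : 0 ≤ w) (hgap : 2 * w < s - t) (hσ : ∀ l ∈ I, s ≤ σ l) (a : ι → ℝ) :
    √2 * w * √(∑ l ∈ I, (a l / (σ l ^ 2 - t ^ 2 - w ^ 2)) ^ 2) ≤
      4 * √2 * (w / (s - t)) * √(∑ l ∈ I, (a l / σ l) ^ 2) := by
  have hg : 0 < s - t := by linarith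
  calc √2 * w * √(∑ l ∈ I, (a l / (σ l ^ 2 - t ^ 2 - w ^ 2)) ^ 2)
      ≤ √2 * w * √((4 / (s - t)) ^ 2 * ∑ l ∈ I, (a l / σ l) ^ 2) := by
        rw [Finset.mul_sum]
        gcongr with l hl
        exact div_sq_sub_le_of_gap ht hw hgap (hσ l hl) (a l)
    _ = 4 * √2 * (w / (s - t)) * √(∑ l ∈ I, (a l / σ l) ^ 2) := by
        rw [Real.sqrt_mul (sq_nonneg _), Real.sqrt_sq (by positivity)]
        ring

theorem leave_one_out_perturbation_general
    (p n : ℕ) (Yhat : Matrix (Fin p) (Fin (n + 1)) ℝ)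
    (Y : Matrix (Fin p) (Fin n) ℝ) (y : Fin p → ℝ)
    (hY : ∀ i j, Y i j = Yhat i (Fin.castSucc j))
    (hy : ∀ i, y i = Yhat i (Fin.last n))
    (r : ℕ) (D : SVDData p n Y) (Dh : SVDData p (n + 1) Yhat)
    (hgap : ∀ l < r, D.sv r ^ 2 + vnorm (y - (projr D.U r).mulVec y) ^ 2 < D.sv l ^ 2) :
    fnorm (projr Dh.U r - projr D.U r) ≤
      Real.sqrt 2 * vnorm (y - (projr D.U r).mulVec y) *
        Real.sqrt (∑ l ∈ Finset.range r, ((∑ j, matCol D.U l j * y j) /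
          (D.sv l ^ 2 - D.sv r ^ 2 - vnorm (y - (projr D.U r).mulVec y) ^ 2)) ^ 2) := by
  set w := vnorm (y - (projr D.U r).mulVec y)
  have hw0 : 0 ≤ w := Real.sqrt_nonneg _
  have hrp : r ≤ p := by
    by_contra! hpr
    have hp := hgap p hpr
    rw [D.sv_zero p (min_le_left _ _)] at hp
    nlinarith [sq_nonneg (D.sv r), sq_nonneg w]
  have hres : w ^ 2 = ∑ k ∈ (leadingIndices p r)ᶜ, (D.Uᵀ *ᵥ y) k ^ 2 :=
    sq_vnorm_sub_projr_mulVec D.U_mem_orthogonalGroup r y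
  have hupdate : Dh.U * diagonal (fun l : Fin p => Dh.sv l ^ 2) * Dh.Uᵀ =
      D.U * diagonal (fun l : Fin p => D.sv l ^ 2) * D.Uᵀ + vecMulVec y y := by
    rw [← D.mul_transpose_eq, ← Dh.mul_transpose_eq, mul_transpose_self_eq_add_vecMulVec_last hY hy]
  have hbound := sum_sum_sq_sub_conj_coordProj_le (S := leadingIndices p r) (M := D.sv r ^ 2)
    D.U_mem_orthogonalGroup Dh.U_mem_orthogonalGroup hupdate
    (fun j hj i hi => Dh.sq_sv_anti (by rw [mem_leadingIndices] at hi hj; omega))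
    (fun l hl => D.sq_sv_anti (by simpa using hl))
    (fun l hl => hres ▸ hgap l (mem_leadingIndices.1 hl))
  rw [← hres, ← projr_eq_mul_coordProj_mul_transpose, ← projr_eq_mul_coordProj_mul_transpose]
    at hbound
  rw [← sum_leadingIndices hrp]
  simp only [sum_matCol_mul]
  calc fnorm (projr Dh.U r - projr D.U r) ≤ √(2 * (w ^ 2 * _)) := Real.sqrt_le_sqrt hbound
    _ = √2 * w * √_ := by
      rw [Real.sqrt_mul zero_le_two, Real.sqrt_mul (sq_nonneg w), Real.sqrt_sq hw0,
        mul_assoc]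

/-- **Theorem 1 (leave-one-out singular subspace perturbation).**
`Y ∈ ℝ^{p×n}` is `Ŷ ∈ ℝ^{p×(n+1)}` with its last column `y` removed.  If the spectral gap
condition `σ_r − σ_{r+1} > 2‖(I − U_r U_rᵀ) y‖` holds, then for any choice of leading-`r`
orthonormal left singular vectors `Û_r` of `Ŷ`,
`‖Û_r Û_rᵀ − U_r U_rᵀ‖_F ≤ 4√2 (‖(I − U_r U_rᵀ) y‖/(σ_r − σ_{r+1})) √(Σ_{i=1}^r (u_iᵀ y/σ_i)²)`. -/
theorem leave_one_out_perturbation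
    (p n : ℕ) (Yhat : Matrix (Fin p) (Fin (n + 1)) ℝ)
    (Y : Matrix (Fin p) (Fin n) ℝ) (y : Fin p → ℝ)
    (hY : ∀ i j, Y i j = Yhat i (Fin.castSucc j))
    (hy : ∀ i, y i = Yhat i (Fin.last n))
    (r : ℕ) (hr0 : 0 < r) (hr : r ≤ min p n)
    (D : SVDData p n Y) (Dh : SVDData p (n + 1) Yhat)
    (hgap : 2 * vnorm (y - (projr D.U r).mulVec y) < D.sv (r - 1) - D.sv r) :
    fnorm (projr Dh.U r - projr D.U r) ≤
      4 * Real.sqrt 2 *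
        (vnorm (y - (projr D.U r).mulVec y) / (D.sv (r - 1) - D.sv r)) *
        Real.sqrt (∑ l ∈ Finset.range r, ((∑ j, matCol D.U l j * y j) / D.sv l) ^ 2) := by
  have hw : 0 ≤ vnorm (y - projr D.U r *ᵥ y) := Real.sqrt_nonneg _
  have hanti : ∀ l < r, D.sv (r - 1) ≤ D.sv l := fun l hl => D.sv_anti l (r - 1) (by omega)
  exact (leave_one_out_perturbation_general p n Yhat Y y hY hy r D Dh fun l hl =>
      sq_add_sq_lt_sq_of_gap (D.sv_nonneg r) hw hgap (hanti l hl)).trans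
    (sqrt_two_mul_sqrt_sum_le_of_gap (D.sv_nonneg r) hw hgap
      (fun l hl => hanti l (Finset.mem_range.1 hl)) _)
end
end

section
/- Let ẑ together with centers θ̂_1,…,θ̂_k be any minimizer of the k-means objective Σ_{i∈[n]} ‖Û_{1:r}Û_{1:r}ᵀ X_i − θ_{z_i}‖² over z ∈ [k]^n and θ_1,…,θ_k ∈ ℝ^p, where κ ≤ r ≤ k. If ψ₀ := Δ / (β^{−1/2} k n^{−1/2} ‖E‖) ≥ 16, then ℓ(ẑ,z*) ≤ β/(2k); moreover there exists a bijection φ of [k] such that ℓ(ẑ,z*) = (1/n)|{i ∈ [n] : ẑ_i ≠ φ(z*_i)}| ≤ 128 k ‖E‖² / (n Δ²) and max_{a∈[k]} ‖θ̂_{φ(a)} − θ*_a‖ ≤ 128 β^{−1/2} k n^{−1/2} ‖E‖. -/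
open Matrix MeasureTheory ProbabilityTheory
open scoped BigOperators ENNReal NNReal

noncomputable section

/-!
By Eckart–Young, `‖X - U_r U_rᵀ X‖ ≤ σ_{r+1}(X) ≤ ‖X - B‖` for every `B` of rank at most `r`: in
the singular bases, the leading `(r+1) × (r+1)` block of `X` is a nonsingular diagonal matrix and
that of `B` is singular. With `B = P`, the matrix `U_r U_rᵀ X - P` has operator norm at most `2‖E‖`
and rank at most `2r`, hence squared Frobenius norm at most `8r‖E‖²`. Comparing the k-means
objective at the fit and at the truth bounds `∑ ‖c (zh i) - θ (z i)‖²` by `32r‖E‖²`. By Chebyshev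
only few indices, fewer than half of the smallest cluster, have a fitted center off by `Δ / 2` or
more. The others survive in every cluster, so they determine the label bijection, and averaging
over them locates each fitted center.
-/

open WithLp (toLp)
open scoped Finset Matrix.Norms.L2Operator

lemma rank_sub_le {m n R : Type*} [Fintype n] [Field R] (A B : Matrix m n R) :
    (A - B).rank ≤ A.rank + B.rank := by
  have h : (A - B).mulVecLin.range ≤ A.mulVecLin.range ⊔ B.mulVecLin.range := by
    rintro _ ⟨v, rfl⟩
    rw [mulVecLin_apply, sub_mulVec]
    exact Submodule.sub_mem_sup ⟨v, rfl⟩ ⟨v, rfl⟩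
  exact (Submodule.finrank_mono h).trans (Submodule.finrank_add_le_finrank_add_finrank _ _)

section OperatorNorm

variable {l m n 𝕜 : Type*} [Fintype l] [Fintype m] [Fintype n]
  [DecidableEq l] [DecidableEq n] [RCLike 𝕜]

lemma l2_opNorm_le_one_of_conjTranspose_mul_self {U : Matrix m n 𝕜} (hU : Uᴴ * U = 1) :
    ‖U‖ ≤ 1 := by
  have h : ‖U‖ * ‖U‖ ≤ 1 := by
    rw [← l2_opNorm_conjTranspose_mul_self, hU, ← diagonal_one, l2_opNorm_diagonal]
    exact (pi_norm_le_iff_of_nonneg zero_le_one).2 fun _ => by simp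
  nlinarith [norm_nonneg U]

lemma l2_opNorm_conjTranspose_mul_mul_le {k : Type*} [Fintype k] [DecidableEq k]
    {U : Matrix m k 𝕜} {V : Matrix n l 𝕜}
    (hU : Uᴴ * U = 1) (hV : Vᴴ * V = 1) (A : Matrix m n 𝕜) : ‖Uᴴ * A * V‖ ≤ ‖A‖ := by
  classical
  calc ‖Uᴴ * A * V‖ ≤ ‖Uᴴ‖ * ‖A‖ * ‖V‖ := by grw [l2_opNorm_mul, l2_opNorm_mul]
    _ ≤ 1 * ‖A‖ * 1 := by
      rw [l2_opNorm_conjTranspose]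
      gcongr <;> exact l2_opNorm_le_one_of_conjTranspose_mul_self ‹_›
    _ = ‖A‖ := by ring

lemma mul_norm_le_norm_diagonal_mulVec {d : n → 𝕜} {s : ℝ} (hs : 0 ≤ s) (hd : ∀ i, s ≤ ‖d i‖)
    (v : n → 𝕜) : s * ‖toLp 2 v‖ ≤ ‖toLp 2 (diagonal d *ᵥ v)‖ := by
  refine le_of_sq_le_sq ?_ (norm_nonneg _)
  simp only [mul_pow, EuclideanSpace.norm_sq_eq, mulVec_diagonal, norm_mul, Finset.mul_sum]
  gcongr with i
  exact hd i

-- `M` kills a nonzero vector, which the diagonal matrix stretches by at least `s`.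
lemma le_l2_opNorm_diagonal_sub_of_rank_lt {d : n → 𝕜} {s : ℝ} (hd : ∀ i, s ≤ ‖d i‖)
    {M : Matrix n n 𝕜} (hM : M.rank < Fintype.card n) : s ≤ ‖diagonal d - M‖ := by
  obtain hs | hs := le_total s 0
  · exact hs.trans (norm_nonneg _)
  obtain ⟨v, hv, hMv⟩ : ∃ v ≠ 0, M *ᵥ v = 0 := by
    rw [exists_mulVec_eq_zero_iff]
    contrapose! hM
    exact (rank_of_det_ne_zero hM).ge
  have hv_pos : 0 < ‖toLp 2 v‖ := by simpa using hv
  have upper : ‖toLp 2 (diagonal d *ᵥ v)‖ ≤ ‖diagonal d - M‖ * ‖toLp 2 v‖ := by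
    simpa [sub_mulVec, hMv] using l2_opNorm_mulVec (diagonal d - M) (toLp 2 v)
  exact le_of_mul_le_mul_right ((mul_norm_le_norm_diagonal_mulVec hs hd v).trans upper) hv_pos

lemma eigenvalues_le_l2_opNorm {A : Matrix n n 𝕜} (hA : A.IsHermitian) (i : n) :
    hA.eigenvalues i ≤ ‖A‖ := by
  have : Nonempty n := ⟨i⟩
  have hi : (hA.eigenvalues i : 𝕜) ∈ spectrum 𝕜 A :=
    spectrum.algebraMap_mem 𝕜 (hA.eigenvalues_mem_spectrum_real i)
  calc hA.eigenvalues i ≤ ‖(hA.eigenvalues i : 𝕜)‖ := by simpa using le_abs_self _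
    _ ≤ ‖A‖ := spectrum.norm_le_norm_of_mem hi

lemma sum_norm_sq_eq_sum_eigenvalues (A : Matrix m n 𝕜) :
    ∑ i, ∑ j, ‖A i j‖ ^ 2 = ∑ j, (isHermitian_conjTranspose_mul_self A).eigenvalues j := by
  have h : ((∑ i, ∑ j, ‖A i j‖ ^ 2 : ℝ) : 𝕜) = (Aᴴ * A).trace := by
    rw [Finset.sum_comm]
    simp [trace, mul_apply, RCLike.conj_mul]
  rw [(isHermitian_conjTranspose_mul_self A).trace_eq_sum_eigenvalues] at h
  exact_mod_cast h

open scoped ComplexOrder in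
lemma sum_norm_sq_le_rank_mul_l2_opNorm_sq (A : Matrix m n 𝕜) :
    ∑ i, ∑ j, ‖A i j‖ ^ 2 ≤ A.rank * ‖A‖ ^ 2 := by
  set hA := isHermitian_conjTranspose_mul_self A
  calc ∑ i, ∑ j, ‖A i j‖ ^ 2 = ∑ j, hA.eigenvalues j := sum_norm_sq_eq_sum_eigenvalues A
    _ = ∑ j with hA.eigenvalues j ≠ 0, hA.eigenvalues j := (Finset.sum_filter_ne_zero _).symm
    _ ≤ ∑ j with hA.eigenvalues j ≠ 0, ‖A‖ ^ 2 := by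
      gcongr with j
      exact (eigenvalues_le_l2_opNorm hA j).trans_eq
        ((l2_opNorm_conjTranspose_mul_self A).trans (sq _).symm)
    _ = A.rank * ‖A‖ ^ 2 := by
      rw [Finset.sum_const, nsmul_eq_mul, ← rank_conjTranspose_mul_self A,
        hA.rank_eq_card_non_zero_eigs, Fintype.card_subtype]

end OperatorNorm

lemma opnorm_eq_l2_opNorm {m n : ℕ} (A : Matrix (Fin m) (Fin n) ℝ) : opnorm A = ‖A‖ := rfl

lemma fnorm_sq {m n : ℕ} (A : Matrix (Fin m) (Fin n) ℝ) :
    fnorm A ^ 2 = ∑ i, ∑ j, A i j ^ 2 :=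
  Real.sq_sqrt (by positivity)

lemma fnorm_sq_le_rank_mul_opnorm_sq {m n : ℕ} (A : Matrix (Fin m) (Fin n) ℝ) :
    fnorm A ^ 2 ≤ A.rank * opnorm A ^ 2 := by
  simpa [fnorm_sq, opnorm_eq_l2_opNorm] using sum_norm_sq_le_rank_mul_l2_opNorm_sq A

section SingularValues

variable {p n r : ℕ} {A : Matrix (Fin p) (Fin n) ℝ}

/-- The `p × n` matrix with `d 0, d 1, …` on its main diagonal and zeros elsewhere, the middle
factor of a singular value decomposition. -/
def rectDiagonal (p n : ℕ) (d : ℕ → ℝ) : Matrix (Fin p) (Fin n) ℝ :=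
  Matrix.of fun i j => if (i : ℕ) = j then d i else 0

lemma rectDiagonal_apply (d : ℕ → ℝ) (i : Fin p) (j : Fin n) :
    rectDiagonal p n d i j = if (i : ℕ) = j then d i else 0 := rfl

lemma transpose_rectDiagonal_mul_self (d : ℕ → ℝ) :
    (rectDiagonal p n d)ᵀ * rectDiagonal p n d =
      diagonal fun j : Fin n => if (j : ℕ) < p then d j ^ 2 else 0 := by
  ext j j'
  simp only [mul_apply, transpose_apply, rectDiagonal_apply, diagonal_apply, ite_mul, zero_mul]
  by_cases hj : (j : ℕ) < p
  · have hval (i : Fin p) : (i : ℕ) = j ↔ i = ⟨j, hj⟩ := by rw [Fin.ext_iff]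
    simp [hval, hj, sq, Fin.val_inj]
  · have hval (i : Fin p) : (i : ℕ) ≠ j := by omega
    simp [hval, hj]

lemma l2_opNorm_rectDiagonal_le {d : ℕ → ℝ} {s : ℝ} (hd : ∀ i, |d i| ≤ s) :
    ‖rectDiagonal p n d‖ ≤ s := by
  have hs : 0 ≤ s := (abs_nonneg _).trans (hd 0)
  refine abs_le_of_sq_le_sq' ?_ hs |>.2
  rw [sq, ← l2_opNorm_conjTranspose_mul_self, conjTranspose_eq_transpose_of_trivial,
    transpose_rectDiagonal_mul_self, l2_opNorm_diagonal, pi_norm_le_iff_of_nonneg (by positivity)]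
  intro j
  split_ifs
  · simpa using sq_le_sq' (neg_le_of_abs_le (hd j)) (le_of_abs_le (hd j))
  · simpa using sq_nonneg s

lemma projr_eq_mul_diagonal_mul (U : Matrix (Fin p) (Fin p) ℝ) (r : ℕ) :
    projr U r = U * diagonal (fun l : Fin p => if (l : ℕ) < r then (1 : ℝ) else 0) * Uᵀ := by
  ext i j
  rw [mul_apply]
  simp [projr, mul_diagonal]

lemma rank_projr_le (U : Matrix (Fin p) (Fin p) ℝ) (r : ℕ) : (projr U r).rank ≤ r := by
  rw [projr_eq_mul_diagonal_mul]
  grw [rank_mul_le_left, rank_mul_le_right]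
  grw [rank_le_card_of_support_subset _ {l : Fin p | (l : ℕ) < r}, Fin.card_filter_val_lt]
  · exact min_le_right _ _
  · intro l hl
    by_contra h
    exact hl (funext fun j => by simp_all)

namespace SVDData

variable (D : SVDData p n A)
include D

lemma transpose_U_mul_mul_V : D.Uᵀ * A * D.V = rectDiagonal p n D.sv := by
  calc D.Uᵀ * A * D.V = D.Uᵀ * (D.U * rectDiagonal p n D.sv * D.Vᵀ) * D.V :=
        congrArg (D.Uᵀ * · * D.V) D.decomp
    _ = (D.Uᵀ * D.U) * rectDiagonal p n D.sv * (D.Vᵀ * D.V) := by simp only [Matrix.mul_assoc]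
    _ = rectDiagonal p n D.sv := by rw [D.hU, D.hV, Matrix.one_mul, Matrix.mul_one]

lemma sub_projr_mul_eq (r : ℕ) :
    A - projr D.U r * A =
      D.U * rectDiagonal p n (fun i => if i < r then 0 else D.sv i) * D.Vᵀ := by
  set G : Matrix (Fin p) (Fin p) ℝ := diagonal fun l => if (l : ℕ) < r then 1 else 0 with hG
  have hA : A = D.U * rectDiagonal p n D.sv * D.Vᵀ := D.decomp
  have hprojU : projr D.U r * D.U = D.U * G := by
    rw [projr_eq_mul_diagonal_mul, Matrix.mul_assoc, D.hU, Matrix.mul_one]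
  have htail : rectDiagonal p n D.sv - G * rectDiagonal p n D.sv =
      rectDiagonal p n (fun i => if i < r then 0 else D.sv i) := by
    ext i j
    by_cases hi : (i : ℕ) < r <;> simp [hG, rectDiagonal_apply, hi]
  calc A - projr D.U r * A
      = D.U * rectDiagonal p n D.sv * D.Vᵀ -
          projr D.U r * (D.U * rectDiagonal p n D.sv * D.Vᵀ) := by rw [← hA]
    _ = D.U * (rectDiagonal p n D.sv - G * rectDiagonal p n D.sv) * D.Vᵀ := by
        simp only [← Matrix.mul_assoc, hprojU, Matrix.mul_sub, Matrix.sub_mul]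
    _ = _ := by rw [htail]

lemma opnorm_sub_projr_mul_le (r : ℕ) : opnorm (A - projr D.U r * A) ≤ D.sv r := by
  have hU : D.Uᵀᴴ * D.Uᵀ = 1 := by simpa using mul_eq_one_comm.1 D.hU
  have hV : D.Vᵀᴴ * D.Vᵀ = 1 := by simpa using mul_eq_one_comm.1 D.hV
  rw [opnorm_eq_l2_opNorm, D.sub_projr_mul_eq]
  refine (l2_opNorm_conjTranspose_mul_mul_le hU hV _).trans (l2_opNorm_rectDiagonal_le fun i => ?_)
  split_ifs with hi
  · simpa using D.sv_nonneg r
  · rw [abs_of_nonneg (D.sv_nonneg i)]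
    exact D.sv_anti r i (not_lt.1 hi)

lemma sv_le_opnorm_sub {B : Matrix (Fin p) (Fin n) ℝ} (hB : B.rank ≤ r) :
    D.sv r ≤ opnorm (A - B) := by
  obtain hr | hr := le_or_gt (min p n) r
  · exact (D.sv_zero r hr).trans_le (norm_nonneg _)
  obtain ⟨hp, hn⟩ : r + 1 ≤ p ∧ r + 1 ≤ n := by omega
  set U := D.U.submatrix id (Fin.castLE hp)
  set V := D.V.submatrix id (Fin.castLE hn)
  have hU : Uᴴ * U = 1 := by
    change (D.Uᵀ * D.U).submatrix (Fin.castLE hp) (Fin.castLE hp) = 1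
    rw [D.hU, submatrix_one _ (Fin.castLE_injective hp)]
  have hV : Vᴴ * V = 1 := by
    change (D.Vᵀ * D.V).submatrix (Fin.castLE hn) (Fin.castLE hn) = 1
    rw [D.hV, submatrix_one _ (Fin.castLE_injective hn)]
  have hA : Uᴴ * A * V = diagonal fun i : Fin (r + 1) => D.sv i := by
    change (D.Uᵀ * A * D.V).submatrix (Fin.castLE hp) (Fin.castLE hn) = _
    rw [D.transpose_U_mul_mul_V]
    ext i j
    simp [rectDiagonal_apply, diagonal_apply, Fin.ext_iff]
  have hB : (Uᴴ * B * V).rank < Fintype.card (Fin (r + 1)) := by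
    grw [rank_mul_le_left, rank_mul_le_right, hB]
    simp
  have hsv (i : Fin (r + 1)) : D.sv r ≤ ‖D.sv i‖ :=
    (D.sv_anti i r (by omega)).trans (le_abs_self _)
  calc D.sv r ≤ ‖diagonal (fun i : Fin (r + 1) => D.sv i) - Uᴴ * B * V‖ :=
        le_l2_opNorm_diagonal_sub_of_rank_lt hsv hB
    _ = ‖Uᴴ * (A - B) * V‖ := by rw [← hA, Matrix.mul_sub, Matrix.sub_mul]
    _ ≤ opnorm (A - B) := l2_opNorm_conjTranspose_mul_mul_le hU hV _

lemma fnorm_projr_mul_sub_sq_le {B : Matrix (Fin p) (Fin n) ℝ} (hB : B.rank ≤ r) :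
    fnorm (projr D.U r * A - B) ^ 2 ≤ 8 * r * opnorm (A - B) ^ 2 := by
  have hrank : (projr D.U r * A - B).rank ≤ 2 * r := by
    have := rank_projr_le D.U r
    grw [rank_sub_le, rank_mul_le_left, this, hB, two_mul]
  have hnorm : opnorm (projr D.U r * A - B) ≤ 2 * opnorm (A - B) := by
    calc opnorm (projr D.U r * A - B) ≤ opnorm (A - projr D.U r * A) + opnorm (A - B) := by
          simp only [opnorm_eq_l2_opNorm]
          rw [norm_sub_rev A]
          exact norm_sub_le_norm_sub_add_norm_sub _ _ _
      _ ≤ 2 * opnorm (A - B) := by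
          linarith [D.opnorm_sub_projr_mul_le r, D.sv_le_opnorm_sub hB]
  calc fnorm (projr D.U r * A - B) ^ 2
      ≤ (projr D.U r * A - B).rank * opnorm (projr D.U r * A - B) ^ 2 :=
        fnorm_sq_le_rank_mul_opnorm_sq _
    _ ≤ (2 * r : ℕ) * (2 * opnorm (A - B)) ^ 2 := by
        gcongr
        exact norm_nonneg _
    _ = 8 * r * opnorm (A - B) ^ 2 := by push_cast; ring

end SVDData
end SingularValues

section Clustering

variable {ι α : Type*}

lemma exists_perm_forall_mem_eq [Finite α] {s : Set ι} {f g : ι → α}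
    (hf : Set.SurjOn f s Set.univ) (hfg : ∀ i ∈ s, ∀ j ∈ s, g i = g j → f i = f j) :
    ∃ φ : Equiv.Perm α, ∀ i ∈ s, g i = φ (f i) := by
  choose rep hrep hf_rep using fun a => hf (Set.mem_univ a)
  have hinj : Function.Injective fun a => g (rep a) := fun a b hab => by
    simpa [hf_rep] using hfg _ (hrep a) _ (hrep b) hab
  let φ := Equiv.ofBijective _ hinj.bijective_of_finite
  refine ⟨φ, fun i hi => ?_⟩
  obtain ⟨b, hb : g (rep b) = g i⟩ := φ.surjective (g i)
  have hbi : b = f i := by simpa [hf_rep] using hfg _ (hrep b) i hi hb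
  rw [← hb, hbi]
  rfl

variable [Fintype ι]

lemma card_fiber_le_card_ne_add_card_ne {β : Type*} [DecidableEq α] [DecidableEq β]
    (f : ι → α) (g : ι → β)
    {φ ψ : α → β} {a : α} (h : φ a ≠ ψ a) :
    #{i | f i = a} ≤ #{i | g i ≠ φ (f i)} + #{i | g i ≠ ψ (f i)} := by
  classical
  refine (Finset.card_le_card fun i hi => ?_).trans (Finset.card_union_le _ _)
  grind

section Metric

variable {M : Type*} [PseudoMetricSpace M]

lemma dist_sq_le_two_mul_add (x y w : M) : dist x w ^ 2 ≤ 2 * (dist x y ^ 2 + dist y w ^ 2) :=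
  (pow_le_pow_left₀ dist_nonneg (dist_triangle x y w) 2).trans add_sq_le

/-- The k-means objective of the assignment `z` and the centers `c` at the data points `x`. -/
def kmeansCost (x : ι → M) (z : ι → α) (c : α → M) : ℝ :=
  ∑ i, dist (x i) (c (z i)) ^ 2

lemma sum_dist_centers_sq_le_four_mul_kmeansCost {x : ι → M} {z zh : ι → α} {θ c : α → M}
    (h : kmeansCost x zh c ≤ kmeansCost x z θ) :
    ∑ i, dist (c (zh i)) (θ (z i)) ^ 2 ≤ 4 * kmeansCost x z θ := by
  calc ∑ i, dist (c (zh i)) (θ (z i)) ^ 2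
      ≤ ∑ i, 2 * (dist (x i) (c (zh i)) ^ 2 + dist (x i) (θ (z i)) ^ 2) := by
        gcongr with i
        rw [dist_comm (x i) (c _)]
        exact dist_sq_le_two_mul_add _ _ _
    _ = 2 * (kmeansCost x zh c + kmeansCost x z θ) := by
        rw [← Finset.mul_sum, Finset.sum_add_distrib, kmeansCost, kmeansCost]
    _ ≤ 4 * kmeansCost x z θ := by linarith

variable {z zh : ι → α} {θ c : α → M} {δ : ℝ}

/-- The indices whose fitted center lies at distance at least `δ / 2` from the true one; off this
set the two assignments agree up to relabelling when the true centers are `δ`-separated. -/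
def farIndices (z zh : ι → α) (θ c : α → M) (δ : ℝ) : Finset ι :=
  {i | δ ≤ 2 * dist (c (zh i)) (θ (z i))}

lemma card_farIndices_mul_sq_le (hδ : 0 ≤ δ) :
    #(farIndices z zh θ c δ) * δ ^ 2 ≤ 4 * ∑ i, dist (c (zh i)) (θ (z i)) ^ 2 := by
  calc #(farIndices z zh θ c δ) * δ ^ 2 = ∑ i ∈ farIndices z zh θ c δ, δ ^ 2 := by simp
    _ ≤ ∑ i ∈ farIndices z zh θ c δ, (2 * dist (c (zh i)) (θ (z i))) ^ 2 := by
        gcongr with i hi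
        exact (Finset.mem_filter.1 hi).2
    _ ≤ ∑ i, (2 * dist (c (zh i)) (θ (z i))) ^ 2 :=
        Finset.sum_le_univ_sum_of_nonneg fun _ => sq_nonneg _
    _ = 4 * ∑ i, dist (c (zh i)) (θ (z i)) ^ 2 := by
        rw [Finset.mul_sum]
        exact Finset.sum_congr rfl fun _ _ => by ring

variable [DecidableEq α]

lemma exists_perm_forall_notMem_farIndices [Finite α]
    (hsep : Pairwise fun a b => δ ≤ dist (θ a) (θ b))
    (hcard : ∀ a, #(farIndices z zh θ c δ) < #{i | z i = a}) :
    ∃ φ : Equiv.Perm α, ∀ i ∉ farIndices z zh θ c δ, zh i = φ (z i) := by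
  refine exists_perm_forall_mem_eq (s := {i | i ∉ farIndices z zh θ c δ}) ?_ ?_
  · intro a _
    obtain ⟨i, hi, hfar⟩ := Finset.exists_mem_notMem_of_card_lt_card (hcard a)
    exact ⟨i, hfar, (Finset.mem_filter.1 hi).2⟩
  · intro i hi j hj hij
    simp only [farIndices, Set.mem_ofPred_eq, Finset.mem_filter_univ, not_le] at hi hj
    by_contra hne
    rw [hij] at hi
    linarith [hsep hne, dist_triangle_left (θ (z i)) (θ (z j)) (c (zh j))]

lemma card_sub_card_mul_dist_sq_le {φ : α → α} {s : Finset ι} (hφ : ∀ i ∉ s, zh i = φ (z i))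
    (a : α) :
    ((#{i | z i = a} : ℝ) - #s) * dist (c (φ a)) (θ a) ^ 2 ≤
      ∑ i, dist (c (zh i)) (θ (z i)) ^ 2 := by
  classical
  set t : Finset ι := {i | z i = a}
  have hcard : (#t : ℝ) - #s ≤ #(t \ s) := by
    rw [sub_le_iff_le_add]
    exact_mod_cast Nat.sub_le_iff_le_add.1 (Finset.le_card_sdiff s t)
  calc ((#t : ℝ) - #s) * dist (c (φ a)) (θ a) ^ 2
      ≤ #(t \ s) * dist (c (φ a)) (θ a) ^ 2 := by gcongr
    _ = ∑ i ∈ t \ s, dist (c (zh i)) (θ (z i)) ^ 2 := by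
        rw [← nsmul_eq_mul, ← Finset.sum_const]
        refine Finset.sum_congr rfl fun i hi => ?_
        obtain ⟨hit, his⟩ := Finset.mem_sdiff.1 hi
        rw [hφ i his, (Finset.mem_filter.1 hit).2]
    _ ≤ ∑ i, dist (c (zh i)) (θ (z i)) ^ 2 :=
        Finset.sum_le_univ_sum_of_nonneg fun _ => sq_nonneg _

theorem exists_perm_of_sum_dist_centers_sq_le [Finite α] {T m : ℝ}
    (hT : ∑ i, dist (c (zh i)) (θ (z i)) ^ 2 ≤ T) (hδ : 0 < δ)
    (hsep : Pairwise fun a b => δ ≤ dist (θ a) (θ b))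
    (hm : 0 < m) (hsize : ∀ a, m ≤ #{i | z i = a}) (hTm : 8 * T ≤ δ ^ 2 * m) :
    ∃ φ : Equiv.Perm α,
      #{i | zh i ≠ φ (z i)} * δ ^ 2 ≤ 4 * T ∧
      #{i | zh i ≠ φ (z i)} ≤ m / 2 ∧
      ∀ a, m * dist (c (φ a)) (θ a) ^ 2 ≤ 2 * T := by
  set s := farIndices z zh θ c δ
  have hs : #s * δ ^ 2 ≤ 4 * T := (card_farIndices_mul_sq_le hδ.le).trans (by linarith)
  have hs_half : #s ≤ m / 2 := by
    refine le_of_mul_le_mul_right ?_ (pow_pos hδ 2)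
    linarith
  obtain ⟨φ, hφ⟩ := exists_perm_forall_notMem_farIndices hsep fun a =>
    Nat.cast_lt (α := ℝ).1 (by linarith [hsize a])
  have herr : (#{i | zh i ≠ φ (z i)} : ℝ) ≤ #s := by
    gcongr
    intro i hi
    by_contra his
    exact (Finset.mem_filter.1 hi).2 (hφ i his)
  refine ⟨φ, le_trans (by gcongr) hs, herr.trans hs_half, fun a => ?_⟩
  have hcenter := card_sub_card_mul_dist_sq_le (θ := θ) (c := c) hφ a
  have hsurplus : m / 2 ≤ #{i | z i = a} - #s := by linarith [hsize a]
  grw [← hsurplus] at hcenter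
  linarith

end Metric
end Clustering

section Matrices

variable {p n k : ℕ}

lemma vnorm_sub_eq_dist (x y : Fin p → ℝ) :
    vnorm (fun i => x i - y i) = dist (toLp 2 x) (toLp 2 y) := by
  simp [vnorm, EuclideanSpace.dist_eq, Real.dist_eq]

lemma dist_toLp_sq (x y : Fin p → ℝ) :
    dist (toLp 2 x) (toLp 2 y) ^ 2 = ∑ i, (x i - y i) ^ 2 := by
  rw [← vnorm_sub_eq_dist, vnorm, Real.sq_sqrt (by positivity)]

/-- The columns of a matrix, as points of Euclidean space. -/
def euclideanCol (A : Matrix (Fin p) (Fin n) ℝ) (j : Fin n) : EuclideanSpace ℝ (Fin p) :=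
  toLp 2 (A.col j)

lemma kmeansCost_euclideanCol (Y : Matrix (Fin p) (Fin n) ℝ) (z : Fin n → Fin k)
    (θ : Fin k → Fin p → ℝ) :
    kmeansCost (euclideanCol Y) z (fun a => toLp 2 (θ a)) = ∑ i, ∑ x, (Y x i - θ (z i) x) ^ 2 := by
  simp only [kmeansCost, euclideanCol, dist_toLp_sq, col_apply]

lemma IsKMeans.kmeansCost_le {W : Matrix (Fin p) (Fin p) ℝ} {X : Matrix (Fin p) (Fin n) ℝ}
    {zh : Fin n → Fin k} {c : Fin k → Fin p → ℝ} (h : IsKMeans W X zh c)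
    (z : Fin n → Fin k) (θ : Fin k → Fin p → ℝ) :
    kmeansCost (euclideanCol (W * X)) zh (fun a => toLp 2 (c a)) ≤
      kmeansCost (euclideanCol (W * X)) z (fun a => toLp 2 (θ a)) := by
  rw [kmeansCost_euclideanCol, kmeansCost_euclideanCol]
  exact h z θ

lemma kmeansCost_euclideanCol_eq_fnorm_sub_sq {P : Matrix (Fin p) (Fin n) ℝ} {z : Fin n → Fin k}
    {θ : Fin k → Fin p → ℝ} (hP : ∀ a j, P a j = θ (z j) a) (Y : Matrix (Fin p) (Fin n) ℝ) :
    kmeansCost (euclideanCol Y) z (fun a => toLp 2 (θ a)) = fnorm (Y - P) ^ 2 := by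
  rw [kmeansCost_euclideanCol, fnorm_sq, Finset.sum_comm]
  simp only [Matrix.sub_apply, hP]

lemma Delta_le_dist (θ : Fin k → Fin p → ℝ) :
    Pairwise fun a b => Delta θ ≤ dist (toLp 2 (θ a)) (toLp 2 (θ b)) := by
  intro a b hab
  rw [← vnorm_sub_eq_dist]
  exact ciInf_le (f := fun q : {q : Fin k × Fin k // q.1 ≠ q.2} =>
    vnorm fun i => θ q.1.1 i - θ q.1.2 i) (Set.finite_range _).bddBelow ⟨(a, b), hab⟩

lemma miscl_eq_card_div {z zh : Fin n → Fin k} {φ : Equiv.Perm (Fin k)}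
    (h : ∀ a, 2 * #{i | zh i ≠ φ (z i)} ≤ #{i | z i = a}) :
    miscl zh z = #{i | zh i ≠ φ (z i)} / n := by
  have hφ (ψ : Equiv.Perm (Fin k)) : #{i | zh i ≠ φ (z i)} ≤ #{i | zh i ≠ ψ (z i)} := by
    obtain rfl | hne := eq_or_ne φ ψ
    · rfl
    obtain ⟨a, ha⟩ := DFunLike.ne_iff.1 hne
    have := h a
    have := card_fiber_le_card_ne_add_card_ne z zh ha
    omega
  rw [miscl]
  congr 1
  exact le_antisymm (ciInf_le (Set.finite_range _).bddBelow φ)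
    (le_ciInf fun ψ => Nat.cast_le.2 (hφ ψ))

/-- The size of the smallest cluster of `z`, so that `betaMin n k z = k / n * minClusterSize z`. -/
def minClusterSize (z : Fin n → Fin k) : ℝ :=
  ⨅ a : Fin k, (#{i | z i = a} : ℝ)

lemma minClusterSize_nonneg (z : Fin n → Fin k) : 0 ≤ minClusterSize z :=
  Real.iInf_nonneg fun _ => Nat.cast_nonneg _

lemma minClusterSize_le (z : Fin n → Fin k) (a : Fin k) : minClusterSize z ≤ #{i | z i = a} :=
  ciInf_le (Set.finite_range _).bddBelow a

lemma betaMin_eq (z : Fin n → Fin k) : betaMin n k z = k / n * minClusterSize z := rfl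

/-- The scale `β^{-1/2} k n^{-1/2} ‖E‖` to which the center separation is compared. -/
def noiseScale (z : Fin n → Fin k) (E : Matrix (Fin p) (Fin n) ℝ) : ℝ :=
  (√(betaMin n k z))⁻¹ * k * (√(n : ℝ))⁻¹ * opnorm E

lemma noiseScale_nonneg (z : Fin n → Fin k) (E : Matrix (Fin p) (Fin n) ℝ) :
    0 ≤ noiseScale z E := by
  have : 0 ≤ opnorm E := norm_nonneg _
  unfold noiseScale
  positivity

lemma pos_of_noiseScale_ne_zero {z : Fin n → Fin k} {E : Matrix (Fin p) (Fin n) ℝ}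
    (h : noiseScale z E ≠ 0) : (0 : ℝ) < n ∧ (0 : ℝ) < k ∧ 0 < minClusterSize z := by
  refine ⟨n.cast_nonneg.lt_of_ne' ?_, k.cast_nonneg.lt_of_ne' ?_,
    (minClusterSize_nonneg z).lt_of_ne' ?_⟩ <;>
  · intro h0
    simp [noiseScale, betaMin_eq, h0] at h

lemma minClusterSize_mul_noiseScale_sq {z : Fin n → Fin k} {E : Matrix (Fin p) (Fin n) ℝ}
    (h : noiseScale z E ≠ 0) : minClusterSize z * noiseScale z E ^ 2 = k * opnorm E ^ 2 := by
  obtain ⟨hn, hk, hm⟩ := pos_of_noiseScale_ne_zero h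
  have hβ : 0 ≤ betaMin n k z := by rw [betaMin_eq]; positivity
  rw [noiseScale, mul_pow, mul_pow, mul_pow, inv_pow, inv_pow, Real.sq_sqrt hβ,
    Real.sq_sqrt hn.le, betaMin_eq]
  field_simp

theorem exists_perm_of_rank_mul_opnorm_sq_le {z zh : Fin n → Fin k} {θ c : Fin k → Fin p → ℝ}
    {P X : Matrix (Fin p) (Fin n) ℝ} (hP : ∀ a j, P a j = θ (z j) a)
    {r : ℕ} (hr : P.rank ≤ r) (D : SVDData p n X)
    (hcost : kmeansCost (euclideanCol (projr D.U r * X)) zh (fun a => toLp 2 (c a)) ≤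
      kmeansCost (euclideanCol (projr D.U r * X)) z (fun a => toLp 2 (θ a)))
    (hΔ : 0 < Delta θ) (hm : 0 < minClusterSize z)
    (hsignal : 256 * r * opnorm (X - P) ^ 2 ≤ Delta θ ^ 2 * minClusterSize z) :
    ∃ φ : Equiv.Perm (Fin k),
      #{i | zh i ≠ φ (z i)} * Delta θ ^ 2 ≤ 128 * r * opnorm (X - P) ^ 2 ∧
      #{i | zh i ≠ φ (z i)} ≤ minClusterSize z / 2 ∧
      ∀ a, minClusterSize z * vnorm (fun i => c (φ a) i - θ a i) ^ 2 ≤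
        64 * r * opnorm (X - P) ^ 2 := by
  have hT : ∑ i, dist (toLp 2 (c (zh i))) (toLp 2 (θ (z i))) ^ 2 ≤
      32 * r * opnorm (X - P) ^ 2 := by
    have hfrob := D.fnorm_projr_mul_sub_sq_le hr
    rw [← kmeansCost_euclideanCol_eq_fnorm_sub_sq hP] at hfrob
    linarith [sum_dist_centers_sq_le_four_mul_kmeansCost hcost]
  obtain ⟨φ, hcount, hhalf, hcenter⟩ := exists_perm_of_sum_dist_centers_sq_le
    (θ := fun a => toLp 2 (θ a)) (c := fun a => toLp 2 (c a)) hT hΔ (Delta_le_dist θ) hm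
    (minClusterSize_le z) (by linarith)
  refine ⟨φ, by linarith, hhalf, fun a => ?_⟩
  rw [vnorm_sub_eq_dist]
  linarith [hcenter a]

end Matrices

theorem spectral_clustering_polynomial_rate_general
    {p n k : ℕ} {z : Fin n → Fin k} {θ : Fin k → Fin p → ℝ}
    {P E X : Matrix (Fin p) (Fin n) ℝ} (hP : ∀ a j, P a j = θ (z j) a) (hX : X = P + E)
    {r : ℕ} (hr : P.rank ≤ r) (hrk : r ≤ k) (D : SVDData p n X)
    {zh : Fin n → Fin k} {c : Fin k → Fin p → ℝ}
    (hcost : kmeansCost (euclideanCol (projr D.U r * X)) zh (fun a => toLp 2 (c a)) ≤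
      kmeansCost (euclideanCol (projr D.U r * X)) z (fun a => toLp 2 (θ a)))
    (hψ : 16 ≤ Delta θ / noiseScale z E) :
    miscl zh z ≤ betaMin n k z / (2 * k) ∧
    ∃ φ : Equiv.Perm (Fin k),
      miscl zh z = #{i | zh i ≠ φ (z i)} / n ∧
      miscl zh z ≤ 128 * k * opnorm E ^ 2 / (n * Delta θ ^ 2) ∧
      ∀ a, vnorm (fun i => c (φ a) i - θ a i) ≤ 8 * noiseScale z E := by
  -- A vanishing noise scale would give `Delta θ / 0 = 0`.
  have hne : noiseScale z E ≠ 0 := fun h => by norm_num [h] at hψ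
  have hpos := (noiseScale_nonneg z E).lt_of_ne' hne
  obtain ⟨hn, hk, hm⟩ := pos_of_noiseScale_ne_zero hne
  have hscale := minClusterSize_mul_noiseScale_sq hne
  have hsep : 16 * noiseScale z E ≤ Delta θ := (le_div_iff₀ hpos).1 hψ
  have hΔ : 0 < Delta θ := by linarith
  have hrE : r * opnorm E ^ 2 ≤ k * opnorm E ^ 2 := by gcongr
  have hsignal : 256 * r * opnorm E ^ 2 ≤ Delta θ ^ 2 * minClusterSize z := by
    grw [← hsep]
    linarith
  obtain rfl : E = X - P := by rw [hX, add_sub_cancel_left]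
  obtain ⟨φ, hcount, hhalf, hcenter⟩ :=
    exists_perm_of_rank_mul_opnorm_sq_le hP hr D hcost hΔ hm hsignal
  have hmiscl : miscl zh z = #{i | zh i ≠ φ (z i)} / n := miscl_eq_card_div fun a => by
    have := hhalf.trans (div_le_div_of_nonneg_right (minClusterSize_le z a) zero_le_two)
    have : (2 * #{i | zh i ≠ φ (z i)} : ℝ) ≤ #{i | z i = a} := by linarith
    exact_mod_cast this
  refine ⟨?_, φ, hmiscl, ?_, fun a => ?_⟩
  · calc miscl zh z ≤ minClusterSize z / 2 / n := by rw [hmiscl]; gcongr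
      _ = betaMin n k z / (2 * k) := by rw [betaMin_eq]; field_simp
  · rw [hmiscl, div_le_div_iff₀ hn (by positivity)]
    nlinarith
  · refine le_of_sq_le_sq ?_ (by positivity)
    refine le_of_mul_le_mul_left ?_ hm
    linarith [hcenter a]

/-- **Proposition 1 (polynomial error rate of spectral clustering).**
Mixture model `X = P + E` with `κ = rank P ≤ r ≤ k`.  If
`ψ₀ := Δ/(β^{-1/2} k n^{-1/2} ‖E‖) ≥ 16`, then the spectral clustering `ẑ` (any global
k-means minimizer on `Û_{1:r}Û_{1:r}ᵀ X`) satisfies `ℓ(ẑ,z*) ≤ β/(2k)`,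
and there is a bijection `φ` of `[k]` with
`ℓ(ẑ,z*) = |{i : ẑ_i ≠ φ(z*_i)}|/n ≤ 128 k ‖E‖²/(n Δ²)` and
`max_a ‖θ̂_{φ(a)} − θ*_a‖ ≤ 128 β^{-1/2} k n^{-1/2} ‖E‖`. -/
theorem spectral_clustering_polynomial_rate
    (p n k : ℕ) (z : Fin n → Fin k) (θ : Fin k → Fin p → ℝ)
    (Pm E X : Matrix (Fin p) (Fin n) ℝ)
    (hP : ∀ a j, Pm a j = θ (z j) a) (hX : X = Pm + E)
    (κ r : ℕ) (hrank : Pm.rank = κ) (hκr : κ ≤ r) (hrk : r ≤ k)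
    (DX : SVDData p n X)
    (zh : Fin n → Fin k) (c : Fin k → Fin p → ℝ)
    (hkm : IsKMeans (projr DX.U r) X zh c)
    (hψ : 16 ≤ Delta θ /
      ((Real.sqrt (betaMin n k z))⁻¹ * (k : ℝ) * (Real.sqrt (n : ℝ))⁻¹ * opnorm E)) :
    miscl zh z ≤ betaMin n k z / (2 * (k : ℝ)) ∧
    ∃ φ : Equiv.Perm (Fin k),
      miscl zh z = ((Finset.univ.filter fun i => zh i ≠ φ (z i)).card : ℝ) / n ∧
      miscl zh z ≤ 128 * (k : ℝ) * opnorm E ^ 2 / ((n : ℝ) * Delta θ ^ 2) ∧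
      ∀ a : Fin k, vnorm (fun i => c (φ a) i - θ a i) ≤
        128 * ((Real.sqrt (betaMin n k z))⁻¹ * (k : ℝ) * (Real.sqrt (n : ℝ))⁻¹ * opnorm E) := by
  obtain ⟨hβ, φ, hmiscl, hrate, hcenter⟩ := spectral_clustering_polynomial_rate_general hP hX
    (hrank.trans_le hκr) hrk DX (hkm.kmeansCost_le z θ) hψ
  refine ⟨hβ, φ, hmiscl, hrate, fun a => (hcenter a).trans ?_⟩
  exact mul_le_mul_of_nonneg_right (by norm_num) (noiseScale_nonneg z E)
end
end
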